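/- Consider the routing game (G, Φ) with U = ∅. Then the unique Wardrop equilibrium (R^W, x^W) and the unique social optimum (R^O, x^O) have the same routing vector: R^W = R^O. -/

import Mathlib

/-!
Both routing vectors are the greedy one: fill the routes `p < k` (the fastest in free flow) to
capacity, send the remaining flow on `k`, and nothing on the routes `p > k`.

On a single route carrying the common flow `z`, no link is jammed, so the travel time is at least
`τ^F` (`Steady.tauF_le`). If `z` is below the capacity, the whole route is in free flow and
all the demand is served (`Steady.free_of_lt_cap`). If the demand exceeds the capacity, the flow is
the capacity, every link upstream of the bottleneck is congested and the travel time is `τ^S`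
(`Steady.tauS_of_cap_lt`).

*Wardrop equilibrium* (`wardrop_greedy`). If some used route is slower than `τ_j^F` for every
`j ≤ k`, then none of these routes is in free flow, so all of them are saturated and already absorb
`Φ`. Since `U = ∅`, an overloaded route `p ≤ k`, having travel time `τ_p^S`, is such a route, as is
any used route `p > k`; both are thereby excluded by mass balance. Finally, a slack route `p < k`
would be in free flow and strictly faster than `k`, which is used.

*Social optimum.* The greedy routing is realised by free-flow densities, so its cost is
`∑ Φ R_p τ_p^F`, and the cost of any assignment is at least the same expression for its own routing.
Under the capacity constraints every term of `∑ (Φ R^O_p - Φ R^W_p) (τ_p^F - τ_k^F)` is nonnegative,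
while minimality makes the sum nonpositive; hence all terms vanish.
-/

/-!
Selfish routing on a parallel network with supply/demand (CTM) link mechanics.
A parallel network has `N` routes joining a single origin-destination pair;
route `p` has links `0, …, n p − 1` (paper indices `1, …, n_p`).
-/

open Finset

noncomputable section

namespace SelfishRouting

/-- A parallel network with `N` routes; route `p` has `n p` links, each specified
by jam density `xbar`, capacity `fbar`, free-flow speed `v` and length `L`, with
the critical density `fbar p l / v p l` strictly below the jam density. -/
structure Network (N : ℕ) where
  n : Fin N → ℕ
  n_pos : ∀ p, 0 < n p
  xbar : (p : Fin N) → Fin (n p) → ℝ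
  fbar : (p : Fin N) → Fin (n p) → ℝ
  v : (p : Fin N) → Fin (n p) → ℝ
  L : (p : Fin N) → Fin (n p) → ℝ
  xbar_pos : ∀ p l, 0 < xbar p l
  fbar_pos : ∀ p l, 0 < fbar p l
  v_pos : ∀ p l, 0 < v p l
  L_pos : ∀ p l, 0 < L p l
  crit_lt_jam : ∀ p l, fbar p l / v p l < xbar p l

namespace Network

variable {N : ℕ} (G : Network N)

/-- critical density of link `l` of route `p`. -/
def xc (p : Fin N) (l : Fin (G.n p)) : ℝ := G.fbar p l / G.v p l

/-- congestion-wave speed of link `l` of route `p`. -/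
def w (p : Fin N) (l : Fin (G.n p)) : ℝ := G.fbar p l / (G.xbar p l - G.xc p l)

/-- supply function of link `l` of route `p`. -/
def supply (p : Fin N) (l : Fin (G.n p)) (x : ℝ) : ℝ :=
  min (G.fbar p l) (G.w p l * (G.xbar p l - x))

/-- demand function of link `l` of route `p`. -/
def demand (p : Fin N) (l : Fin (G.n p)) (x : ℝ) : ℝ :=
  min (G.v p l * x) (G.fbar p l)

/-- route capacity `z̄_p = min_{l ∈ p} f̄_l`. -/
def cap (p : Fin N) : ℝ :=
  (Finset.univ : Finset (Fin (G.n p))).inf' ⟨⟨0, G.n_pos p⟩, Finset.mem_univ _⟩ (G.fbar p)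

/-- the first link of route `p`. -/
def first (p : Fin N) : Fin (G.n p) := ⟨0, G.n_pos p⟩

/-- flow `f_{0_p}` entering the first link of route `p`, under inflow demand `φ`. -/
def inflow (p : Fin N) (φ : ℝ) (x : Fin (G.n p) → ℝ) : ℝ :=
  min φ (G.supply p (G.first p) (x (G.first p)))

/-- flow `f_{(l+1)_p}` leaving link `l` of route `p`. -/
def outflow (p : Fin N) (x : Fin (G.n p) → ℝ) (l : Fin (G.n p)) : ℝ :=
  if h : (l : ℕ) + 1 < G.n p then
    min (G.demand p l (x l)) (G.supply p ⟨(l : ℕ) + 1, h⟩ (x ⟨(l : ℕ) + 1, h⟩))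
  else G.demand p l (x l)

/-- `x` lies in the box `∏ [0, x̄]`. -/
def InBox (x : ∀ p : Fin N, Fin (G.n p) → ℝ) : Prop :=
  ∀ p l, 0 ≤ x p l ∧ x p l ≤ G.xbar p l

/-- `R` is a routing vector: nonnegative entries summing to one. -/
def RoutingVector (R : Fin N → ℝ) : Prop :=
  (∀ p, 0 ≤ R p) ∧ ∑ p, R p = 1

/-- `x` is a consistent density vector for routing vector `R` under exogenous flow
`Φ`: on each route all link flows coincide (route `p` gets inflow demand `Φ R_p`). -/
def Consistent (Φ : ℝ) (R : Fin N → ℝ) (x : ∀ p : Fin N, Fin (G.n p) → ℝ) : Prop :=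
  G.InBox x ∧ ∀ p l, G.outflow p (x p) l = G.inflow p (Φ * R p) (x p)

/-- a traffic assignment: a routing vector with a consistent density vector. -/
def Assignment (Φ : ℝ) (R : Fin N → ℝ) (x : ∀ p : Fin N, Fin (G.n p) → ℝ) : Prop :=
  RoutingVector R ∧ G.Consistent Φ R x

/-- an assignment is fully transferring when the (common) flow on each route `p`
equals the full inflow demand `Φ R_p`; otherwise it is partially transferring. -/
def FullyTransferring (Φ : ℝ) (R : Fin N → ℝ) (x : ∀ p : Fin N, Fin (G.n p) → ℝ) : Prop :=
  ∀ p, G.inflow p (Φ * R p) (x p) = Φ * R p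

/-- travel time of link `l` of route `p` at density `x` (equal to `L/v` at `x = 0`). -/
def tauLink (p : Fin N) (l : Fin (G.n p)) (x : ℝ) : ℝ :=
  if x = 0 then G.L p l / G.v p l
  else G.L p l * x / min (G.v p l * x) (G.w p l * (G.xbar p l - x))

/-- travel time of route `p` at the density vector `x`. -/
def tau (p : Fin N) (x : ∀ q : Fin N, Fin (G.n q) → ℝ) : ℝ :=
  ∑ l, G.tauLink p l (x p l)

/-- free-flow travel time `τ_p^F` of route `p`. -/
def tauF (p : Fin N) : ℝ := ∑ l, G.L p l / G.v p l

/-- maximal travel time `τ_p^S` of route `p`, given its bottleneck link `b`. -/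
def tauS (p : Fin N) (b : Fin (G.n p)) : ℝ :=
  ∑ l : Fin (G.n p),
    if (l : ℕ) < (b : ℕ) then G.tauLink p l (G.xbar p l - G.cap p / G.w p l)
    else G.L p l / G.v p l

/-- Wardrop equilibrium: a traffic assignment in which every used route has
minimal travel time. -/
def Wardrop (Φ : ℝ) (R : Fin N → ℝ) (x : ∀ p : Fin N, Fin (G.n p) → ℝ) : Prop :=
  G.Assignment Φ R x ∧ ∀ p, 0 < R p → ∀ q, G.tau p x ≤ G.tau q x

/-- the set `U = {p ≤ k : τ_p^S ≤ τ_j^F for some j ≤ k}`, given the index `k`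
and the bottleneck links `b`. -/
def Uset (k : Fin N) (b : ∀ p : Fin N, Fin (G.n p)) : Set (Fin N) :=
  {p | p ≤ k ∧ ∃ j ≤ k, G.tauS p (b p) ≤ G.tauF j}

/-- social optimum: a traffic assignment respecting the route capacity
constraints and minimizing the total travel time among all such assignments. -/
def SocialOptimum (Φ : ℝ) (R : Fin N → ℝ) (x : ∀ p : Fin N, Fin (G.n p) → ℝ) : Prop :=
  G.Assignment Φ R x ∧ (∀ p, Φ * R p ≤ G.cap p) ∧
  ∀ R' x', G.Assignment Φ R' x' → (∀ p, Φ * R' p ≤ G.cap p) →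
    ∑ p, Φ * R p * G.tau p x ≤ ∑ p, Φ * R' p * G.tau p x'

end Network

end SelfishRouting

end

namespace SelfishRouting

namespace Network

variable {N : ℕ} (G : Network N)

/-! ### Single links -/

lemma gap_pos (p : Fin N) (l : Fin (G.n p)) : 0 < G.xbar p l - G.xc p l :=
  sub_pos.2 (G.crit_lt_jam p l)

lemma w_pos (p : Fin N) (l : Fin (G.n p)) : 0 < G.w p l :=
  div_pos (G.fbar_pos p l) (G.gap_pos p l)

lemma w_mul_gap (p : Fin N) (l : Fin (G.n p)) :
    G.w p l * (G.xbar p l - G.xc p l) = G.fbar p l :=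
  div_mul_cancel₀ _ (G.gap_pos p l).ne'

lemma v_mul_xc (p : Fin N) (l : Fin (G.n p)) : G.v p l * G.xc p l = G.fbar p l :=
  mul_div_cancel₀ _ (G.v_pos p l).ne'

/-- The demand and supply branches of a link cross exactly at the critical density. -/
lemma fbar_le_iff (p : Fin N) (l : Fin (G.n p)) (x : ℝ) :
    G.fbar p l ≤ G.w p l * (G.xbar p l - x) ↔ G.v p l * x ≤ G.fbar p l := by
  have hw := G.w_pos p l
  have hv := G.v_pos p l
  have h1 := G.w_mul_gap p l
  have h2 := G.v_mul_xc p l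
  constructor
  · intro h
    have : x ≤ G.xc p l := by
      by_contra! hx
      nlinarith
    nlinarith
  · intro h
    have : x ≤ G.xc p l := by
      by_contra! hx
      nlinarith
    nlinarith

lemma tauLink_free (p : Fin N) (l : Fin (G.n p)) {x : ℝ} (h : G.v p l * x ≤ G.fbar p l) :
    G.tauLink p l x = G.L p l / G.v p l := by
  unfold tauLink
  split_ifs with hx
  · rfl
  · rw [min_eq_left (h.trans ((G.fbar_le_iff p l x).2 h))]
    exact mul_div_mul_right _ _ hx

lemma le_tauLink (p : Fin N) (l : Fin (G.n p)) {x : ℝ} (h0 : 0 ≤ x) (h1 : x < G.xbar p l) :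
    G.L p l / G.v p l ≤ G.tauLink p l x := by
  unfold tauLink
  split_ifs with hx
  · exact le_rfl
  · have hx0 : 0 < x := lt_of_le_of_ne h0 (Ne.symm hx)
    have hv : 0 < G.v p l * x := mul_pos (G.v_pos p l) hx0
    have hw : 0 < G.w p l * (G.xbar p l - x) := mul_pos (G.w_pos p l) (sub_pos.2 h1)
    rw [← mul_div_mul_right (G.L p l) (G.v p l) hx]
    exact div_le_div_of_nonneg_left (mul_pos (G.L_pos p l) hx0).le (lt_min hv hw)
      (min_le_left _ _)

lemma cap_le (p : Fin N) (l : Fin (G.n p)) : G.cap p ≤ G.fbar p l :=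
  Finset.inf'_le _ (Finset.mem_univ l)

lemma cap_pos (p : Fin N) : 0 < G.cap p :=
  (Finset.lt_inf'_iff _).2 fun l _ => G.fbar_pos p l

lemma cap_eq (p : Fin N) {b : Fin (G.n p)} (hb : ∀ l, l ≠ b → G.fbar p b < G.fbar p l) :
    G.cap p = G.fbar p b := by
  refine le_antisymm (G.cap_le p b) (Finset.le_inf' _ _ fun l _ => ?_)
  rcases eq_or_ne l b with rfl | h
  · exact le_rfl
  · exact (hb l h).le

/-! ### Steady states of one route -/

/-- The density profile `x` on route `p`, with inflow demand `φ`, carries the common flow `z`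
through all its links. -/
def Steady (p : Fin N) (φ z : ℝ) (x : Fin (G.n p) → ℝ) : Prop :=
  (∀ l, 0 ≤ x l ∧ x l ≤ G.xbar p l) ∧ G.inflow p φ x = z ∧ ∀ l, G.outflow p x l = z

variable {G}

lemma Consistent.steady {Φ : ℝ} {R : Fin N → ℝ} {x : ∀ p : Fin N, Fin (G.n p) → ℝ}
    (h : G.Consistent Φ R x) (p : Fin N) :
    G.Steady p (Φ * R p) (G.inflow p (Φ * R p) (x p)) (x p) :=
  ⟨h.1 p, rfl, h.2 p⟩

namespace Steady

variable {p : Fin N} {φ z : ℝ} {x : Fin (G.n p) → ℝ}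

lemma le_demand (h : G.Steady p φ z x) (l : Fin (G.n p)) : z ≤ G.demand p l (x l) := by
  have := h.2.2 l
  unfold outflow at this
  split_ifs at this with hl
  · exact this ▸ min_le_left _ _
  · exact this.ge

lemma demand_last (h : G.Steady p φ z x) (l : Fin (G.n p)) (hl : ¬ (l : ℕ) + 1 < G.n p) :
    G.demand p l (x l) = z := by
  have := h.2.2 l
  unfold outflow at this
  rwa [dif_neg hl] at this

lemma min_next (h : G.Steady p φ z x) (l : Fin (G.n p)) (hl : (l : ℕ) + 1 < G.n p) :
    min (G.demand p l (x l)) (G.supply p ⟨(l : ℕ) + 1, hl⟩ (x ⟨(l : ℕ) + 1, hl⟩)) = z := by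
  have := h.2.2 l
  unfold outflow at this
  rwa [dif_pos hl] at this

lemma le_supply (h : G.Steady p φ z x) (l : Fin (G.n p)) : z ≤ G.supply p l (x l) := by
  obtain ⟨_ | m, hm⟩ := l
  · exact h.2.1 ▸ min_le_right _ _
  · exact h.min_next ⟨m, by omega⟩ hm ▸ min_le_right _ _

lemma le_fbar (h : G.Steady p φ z x) (l : Fin (G.n p)) : z ≤ G.fbar p l :=
  (h.le_supply l).trans (min_le_left _ _)

lemma le_cap (h : G.Steady p φ z x) : z ≤ G.cap p :=
  Finset.le_inf' _ _ fun l _ => h.le_fbar l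

lemma le_inflow (h : G.Steady p φ z x) : z ≤ φ := h.2.1 ▸ min_le_left _ _

/-- Downward induction along the links of a route, starting from the last one. -/
lemma downward {n : ℕ} {P : Fin n → Prop} (last : ∀ l : Fin n, ¬ (l : ℕ) + 1 < n → P l)
    (step : ∀ (l : Fin n) (hl : (l : ℕ) + 1 < n), P ⟨(l : ℕ) + 1, hl⟩ → P l) (l : Fin n) :
    P l := by
  have key : ∀ d : ℕ, ∀ l : Fin n, (l : ℕ) + 1 + d = n → P l := by
    intro d
    induction d with
    | zero => exact fun l hl => last l (by omega)
    | succ d ih => exact fun l hl => step l (by omega) (ih _ (by simp only; omega))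
  exact key (n - (l + 1)) l (by omega)

/-- A jammed link would pass no flow, hence would have to face a jammed successor; but a jammed
last link discharges a positive flow. In particular the quotient defining `tauLink` never has a
zero denominator at a nonzero density. -/
lemma lt_jam (h : G.Steady p φ z x) (l : Fin (G.n p)) : x l < G.xbar p l := by
  have hz : ∀ l : Fin (G.n p), x l = G.xbar p l → z ≤ 0 ∧ 0 < G.demand p l (x l) := by
    intro l hl
    refine ⟨(h.le_supply l).trans ((min_le_right _ _).trans (by simp [hl])), ?_⟩
    rw [hl]
    exact lt_min (mul_pos (G.v_pos p l) (G.xbar_pos p l)) (G.fbar_pos p l)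
  refine downward (P := fun l => x l < G.xbar p l) (fun l hl => ?_) (fun l hl ih => ?_) l
  · refine lt_of_le_of_ne (h.1 l).2 fun he => ?_
    have := hz l he
    have := h.demand_last l hl
    linarith
  · refine lt_of_le_of_ne (h.1 l).2 fun he => ?_
    have h1 := hz l he
    have h2 := h.min_next l hl
    have h3 : 0 < G.supply p ⟨(l : ℕ) + 1, hl⟩ (x ⟨(l : ℕ) + 1, hl⟩) :=
      lt_min (G.fbar_pos p _) (mul_pos (G.w_pos p _) (sub_pos.2 ih))
    have := lt_min h1.2 h3
    linarith

lemma v_mul_of_demand {l : Fin (G.n p)} (hd : G.demand p l (x l) = z)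
    (hz : z < G.fbar p l) : G.v p l * x l = z := by
  unfold demand at hd
  rcases min_choice (G.v p l * x l) (G.fbar p l) with h1 | h1 <;> linarith

/-- If the flow is below the capacity of link `l` and of all links downstream of it, then `l` is in
free flow. -/
lemma v_mul_eq (h : G.Steady p φ z x) (l : Fin (G.n p)) (hz : ∀ m, l ≤ m → z < G.fbar p m) :
    G.v p l * x l = z := by
  refine downward (P := fun l => (∀ m, l ≤ m → z < G.fbar p m) → G.v p l * x l = z)
    (fun l hl hz => ?_) (fun l hl ih hz => ?_) l hz
  · exact v_mul_of_demand (h.demand_last l hl) (hz l le_rfl)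
  · have hle : l ≤ ⟨(l : ℕ) + 1, hl⟩ := Fin.le_def.2 (Nat.le_succ _)
    have h1 := ih fun m hm => hz m (hle.trans hm)
    have h2 := hz _ hle
    refine v_mul_of_demand ?_ (hz l le_rfl)
    have h3 : z < G.supply p ⟨(l : ℕ) + 1, hl⟩ (x ⟨(l : ℕ) + 1, hl⟩) :=
      lt_min h2 (h2.trans_le ((G.fbar_le_iff p _ _).2 (h1.trans_lt h2).le))
    have h4 := h.min_next l hl
    rcases min_choice (G.demand p l (x l))
      (G.supply p ⟨(l : ℕ) + 1, hl⟩ (x ⟨(l : ℕ) + 1, hl⟩)) with h5 | h5 <;> linarith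

/-- A route whose flow is below its capacity serves its whole demand, in free flow. -/
lemma free_of_lt_cap (h : G.Steady p φ z x) (hz : z < G.cap p) :
    φ = z ∧ ∀ l, G.v p l * x l ≤ G.fbar p l := by
  have hv := fun l => h.v_mul_eq l fun m _ => hz.trans_le (G.cap_le p m)
  have hle := fun l => (hv l).trans_le (h.le_fbar l)
  refine ⟨?_, hle⟩
  have h1 := h.2.1
  have h2 : z < G.supply p (G.first p) (x (G.first p)) :=
    (hz.trans_le (G.cap_le p _)).trans_le (le_min le_rfl ((G.fbar_le_iff p _ _).2 (hle _)))
  unfold inflow at h1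
  rcases min_choice φ (G.supply p (G.first p) (x (G.first p))) with h5 | h5 <;> linarith

/-- When part of the demand is rejected at the entrance, the congestion spills back from the
bottleneck to the entrance: the supply of every link up to the bottleneck is binding. -/
lemma supply_eq (h : G.Steady p φ z x) (hφ : z < φ) {b : Fin (G.n p)}
    (hz : ∀ l, l < b → z < G.fbar p l) (l : Fin (G.n p)) (hl : l ≤ b) :
    G.supply p l (x l) = z := by
  obtain ⟨m, hm⟩ := l
  induction m with
  | zero =>
    have h1 := h.2.1
    unfold inflow first at h1
    rcases min_choice φ (G.supply p ⟨0, G.n_pos p⟩ (x ⟨0, G.n_pos p⟩)) with h5 | h5 <;> linarith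
  | succ m ih =>
    have hlt : (⟨m, by omega⟩ : Fin (G.n p)) < b := lt_of_lt_of_le (Fin.lt_def.2 (by simp)) hl
    have h1 := ih (by omega) hlt.le
    have h2 := hz _ hlt
    have h3 := h.min_next ⟨m, by omega⟩ hm
    have h4 : G.demand p ⟨m, by omega⟩ (x ⟨m, by omega⟩) = G.fbar p ⟨m, by omega⟩ := by
      refine min_eq_right (not_lt.1 fun hlt' => ?_)
      have := le_min le_rfl ((G.fbar_le_iff p _ _).2 hlt'.le)
      exact absurd h1 (h2.trans_le this).ne'
    rw [h4] at h3
    rcases min_choice (G.fbar p ⟨m, by omega⟩)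
      (G.supply p ⟨m + 1, hm⟩ (x ⟨m + 1, hm⟩)) with h5 | h5
    · linarith
    · exact h5 ▸ h3

end Steady

/-! ### Route travel times -/

lemma Steady.tauF_le {p : Fin N} {φ z : ℝ} {x : ∀ q : Fin N, Fin (G.n q) → ℝ}
    (h : G.Steady p φ z (x p)) : G.tauF p ≤ G.tau p x :=
  Finset.sum_le_sum fun l _ => G.le_tauLink p l (h.1 l).1 (h.lt_jam l)

lemma tau_eq_tauF {p : Fin N} {x : ∀ q : Fin N, Fin (G.n q) → ℝ}
    (h : ∀ l, G.v p l * x p l ≤ G.fbar p l) : G.tau p x = G.tauF p :=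
  Finset.sum_congr rfl fun l _ => G.tauLink_free p l (h l)

/-- On an overloaded route the densities are determined: congested at flow `cap p` upstream of the
bottleneck, and in free flow from the bottleneck on. -/
lemma Steady.tauS_of_cap_lt {p : Fin N} {φ z : ℝ} {x : ∀ q : Fin N, Fin (G.n q) → ℝ}
    (h : G.Steady p φ z (x p)) {b : Fin (G.n p)} (hb : ∀ l, l ≠ b → G.fbar p b < G.fbar p l)
    (hφ : G.cap p < φ) : G.tau p x = G.tauS p b := by
  have hz : z = G.cap p := by
    refine h.le_cap.eq_of_not_lt fun hlt => ?_
    have := (h.free_of_lt_cap hlt).1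
    linarith
  have hcap := G.cap_eq p hb
  have hlt : ∀ l, l ≠ b → z < G.fbar p l := fun l hl => by
    rw [hz, hcap]
    exact hb l hl
  refine Finset.sum_congr rfl fun l _ => ?_
  rcases lt_trichotomy l b with hl | hl | hl
  · rw [if_pos (Fin.lt_def.1 hl)]
    -- Upstream the binding supply is its decreasing branch, which determines the density.
    have h1 := h.supply_eq (hz.trans_lt hφ) (fun l hl => hlt l hl.ne) l hl.le
    have h2 := hlt l hl.ne
    have h3 : G.w p l * (G.xbar p l - x p l) = z := by
      unfold supply at h1
      rcases min_choice (G.fbar p l) (G.w p l * (G.xbar p l - x p l)) with h5 | h5 <;> linarith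
    have h4 : G.cap p / G.w p l = G.xbar p l - x p l := by
      rw [← hz, ← h3, mul_div_cancel_left₀ _ (G.w_pos p l).ne']
    rw [h4, sub_sub_cancel]
  · subst hl
    rw [if_neg (lt_irrefl _)]
    -- The flow equals the bottleneck capacity, so the supply constraint keeps it subcritical.
    refine G.tauLink_free p l ((G.fbar_le_iff p l _).1 ?_)
    rw [← hcap, ← hz]
    exact (h.le_supply l).trans (min_le_right _ _)
  · rw [if_neg (not_lt.2 (Fin.le_def.1 hl.le))]
    refine G.tauLink_free p l ?_
    rw [h.v_mul_eq l fun m hm => hlt m (hl.trans_le hm).ne']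
    exact h.le_fbar l

/-- Any routing within the route capacities is realised by free-flow densities. -/
lemma assignment_free {Φ : ℝ} (hΦ : 0 < Φ) {R : Fin N → ℝ} (hR : RoutingVector R)
    (hcap : ∀ p, Φ * R p ≤ G.cap p) : G.Assignment Φ R (fun p l => Φ * R p / G.v p l) := by
  have h0 : ∀ p, 0 ≤ Φ * R p := fun p => mul_nonneg hΦ.le (hR.1 p)
  have hle : ∀ p l, Φ * R p ≤ G.fbar p l := fun p l => (hcap p).trans (G.cap_le p l)
  have hv : ∀ p l, G.v p l * (Φ * R p / G.v p l) = Φ * R p :=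
    fun p l => mul_div_cancel₀ _ (G.v_pos p l).ne'
  have hd : ∀ p l, G.demand p l (Φ * R p / G.v p l) = Φ * R p := fun p l => by
    unfold demand
    rw [hv, min_eq_left (hle p l)]
  have hs : ∀ p l, Φ * R p ≤ G.supply p l (Φ * R p / G.v p l) := fun p l =>
    (hle p l).trans (le_min le_rfl ((G.fbar_le_iff p l _).2 ((hv p l).trans_le (hle p l))))
  refine ⟨hR, fun p l => ⟨div_nonneg (h0 p) (G.v_pos p l).le, ?_⟩, fun p l => ?_⟩
  · exact (div_le_div_of_nonneg_right (hle p l) (G.v_pos p l).le).trans (G.crit_lt_jam p l).le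
  · unfold outflow inflow
    rw [min_eq_left (hs p _), hd]
    split_ifs
    · exact min_eq_left (hs p _)
    · rfl

/-! ### The Wardrop equilibrium is greedy -/

lemma RoutingVector.sum_mul {Φ : ℝ} {R : Fin N → ℝ} (hR : RoutingVector R) :
    ∑ p, Φ * R p = Φ := by
  rw [← Finset.mul_sum, hR.2, mul_one]

/-- If the routes `j ≤ k` are all saturated, then no further flow is available: none of them is
overloaded and no other route is used. -/
lemma no_excess {Φ : ℝ} (hΦ : 0 < Φ) {R : Fin N → ℝ} (hR : RoutingVector R) {k : Fin N}
    (hk : Φ ≤ ∑ q ∈ Finset.univ.filter (fun q => q ≤ k), G.cap q)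
    (hsat : ∀ j ≤ k, G.cap j ≤ Φ * R j) :
    (∀ p, k < p → R p = 0) ∧ ∀ p ≤ k, Φ * R p ≤ G.cap p := by
  classical
  -- Each route has nonnegative excess over its greedy target, and the total excess is at most zero.
  have hnn : ∀ p, 0 ≤ Φ * R p - (if p ≤ k then G.cap p else 0) := by
    intro p
    split_ifs with hp
    · exact sub_nonneg.2 (hsat p hp)
    · simpa using mul_nonneg hΦ.le (hR.1 p)
  have hsum : ∑ p, (Φ * R p - (if p ≤ k then G.cap p else 0)) ≤ 0 := by
    rw [Finset.sum_sub_distrib, hR.sum_mul, ← Finset.sum_filter]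
    linarith
  have hz := fun p => (Finset.sum_eq_zero_iff_of_nonneg fun p _ => hnn p).1
    (le_antisymm hsum (Finset.sum_nonneg fun p _ => hnn p)) p (Finset.mem_univ p)
  refine ⟨fun p hp => ?_, fun p hp => ?_⟩
  · have := hz p
    rw [if_neg (not_le.2 hp), sub_zero] at this
    exact (mul_eq_zero.1 this).resolve_left hΦ.ne'
  · have := hz p
    rw [if_pos hp] at this
    linarith

/-- When `U = ∅`, a Wardrop equilibrium fills the routes before `k` exactly, does not overload `k`,
and leaves the routes after `k` empty. -/
lemma wardrop_greedy {Φ : ℝ} (hΦ : 0 < Φ) {b : ∀ p : Fin N, Fin (G.n p)}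
    (hb : ∀ p l, l ≠ b p → G.fbar p (b p) < G.fbar p l)
    (hordF : ∀ p q : Fin N, p < q → G.tauF p < G.tauF q) {k : Fin N}
    (hk : Φ ≤ ∑ q ∈ Finset.univ.filter (fun q => q ≤ k), G.cap q)
    (hkmin : ∀ p, p < k → ¬ Φ ≤ ∑ q ∈ Finset.univ.filter (fun q => q ≤ p), G.cap q)
    (hU : G.Uset k b = ∅) {R : Fin N → ℝ} {x : ∀ p : Fin N, Fin (G.n p) → ℝ}
    (hW : G.Wardrop Φ R x) :
    (∀ p, k < p → R p = 0) ∧ (∀ p, Φ * R p ≤ G.cap p) ∧ ∀ p < k, Φ * R p = G.cap p := by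
  classical
  obtain ⟨⟨hR, hC⟩, hmin⟩ := hW
  have hS := hC.steady
  have hslack : ∀ j, Φ * R j < G.cap j → G.tau j x = G.tauF j := fun j hj =>
    tau_eq_tauF ((hS j).free_of_lt_cap ((hS j).le_inflow.trans_lt hj)).2
  -- A used route slower than every `τ_j^F`, `j ≤ k`, forces all routes `j ≤ k` to be saturated.
  have hslow : ∀ p, 0 < R p → (∀ j ≤ k, G.tauF j < G.tau p x) →
      (∀ p, k < p → R p = 0) ∧ ∀ p ≤ k, Φ * R p ≤ G.cap p := by
    refine fun p hp hlt => no_excess hΦ hR hk fun j hj => not_lt.1 fun hs => ?_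
    have h1 := hlt j hj
    have h2 := hmin p hp j
    rw [hslack j hs] at h2
    linarith
  have hzero : ∀ p, k < p → R p = 0 := by
    intro p hp
    by_contra hne
    have hpos : 0 < R p := lt_of_le_of_ne (hR.1 p) (Ne.symm hne)
    exact hne ((hslow p hpos fun j hj =>
      (hordF j p (hj.trans_lt hp)).trans_le (hS p).tauF_le).1 p hp)
  have hcap : ∀ p, Φ * R p ≤ G.cap p := by
    intro p
    rcases lt_or_ge k p with hp | hp
    · rw [hzero p hp, mul_zero]
      exact (G.cap_pos p).le
    · by_contra! hgt
      have hpos : 0 < R p := pos_of_mul_pos_right ((G.cap_pos p).trans hgt) hΦ.le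
      refine absurd ((hslow p hpos fun j hj => ?_).2 p hp) (not_le.2 hgt)
      rw [(hS p).tauS_of_cap_lt (hb p) hgt]
      by_contra! hle
      have : p ∈ G.Uset k b := ⟨hp, j, hj, hle⟩
      rw [hU] at this
      exact this
  refine ⟨hzero, hcap, fun p hp => (hcap p).eq_of_not_lt fun hlt => ?_⟩
  -- By minimality of `k`, the routes before `k` cannot carry all of `Φ`, so `k` is used.
  have hkpos : 0 < R k := by
    refine lt_of_le_of_ne (hR.1 k) fun h0 => ?_
    have hk0 : (k : ℕ) ≠ 0 := by
      have := Fin.lt_def.1 hp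
      omega
    have hq := hkmin ⟨(k : ℕ) - 1, by omega⟩ (Fin.lt_def.2 (by simp only; omega))
    refine hq ?_
    rw [Finset.sum_filter]
    refine hR.sum_mul.ge.trans (Finset.sum_le_sum fun q _ => ?_)
    split_ifs with hqk
    · exact hcap q
    · have hkq : k ≤ q := by
        rw [Fin.le_def] at hqk ⊢
        simp only at hqk
        omega
      rcases hkq.eq_or_lt with rfl | hkq
      · rw [← h0, mul_zero]
      · rw [hzero q hkq, mul_zero]
  have h1 := hmin k hkpos p
  rw [hslack p hlt] at h1
  have h2 := (hS k).tauF_le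
  have h3 := hordF p k hp
  linarith

end Network

/-- When `U = ∅`, the unique Wardrop equilibrium and the unique
social optimum of the routing game `(G, Φ)` have the same routing vector. -/
theorem wardrop_routing_eq_socialOptimum_routing {N : ℕ} (G : Network N)
    (Φ : ℝ) (hΦ : 0 < Φ) (hmc : Φ ≤ ∑ p, G.cap p)
    (b : ∀ p : Fin N, Fin (G.n p))
    (hb : ∀ p l, l ≠ b p → G.fbar p (b p) < G.fbar p l)
    (hordF : ∀ p q : Fin N, p < q → G.tauF p < G.tauF q)
    (hdistS : ∀ p q : Fin N, p ≠ q → G.tauS p (b p) ≠ G.tauS q (b q))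
    (k : Fin N)
    (hk : Φ ≤ ∑ q ∈ Finset.univ.filter (fun q => q ≤ k), G.cap q)
    (hkmin : ∀ p, p < k → ¬ Φ ≤ ∑ q ∈ Finset.univ.filter (fun q => q ≤ p), G.cap q)
    (hU : G.Uset k b = ∅)
    (Rw : Fin N → ℝ) (xw : ∀ p : Fin N, Fin (G.n p) → ℝ)
    (Ro : Fin N → ℝ) (xo : ∀ p : Fin N, Fin (G.n p) → ℝ)
    (hW : G.Wardrop Φ Rw xw) (hO : G.SocialOptimum Φ Ro xo) :
    Rw = Ro := by
  have hSW := hW.1.1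
  obtain ⟨hzero, hcap, hfull⟩ := Network.wardrop_greedy hΦ hb hordF hk hkmin hU hW
  obtain ⟨⟨hRo, hCo⟩, hcapo, hopt⟩ := hO
  have hfree := Network.assignment_free (G := G) hΦ hSW hcap
  have hle := hopt _ _ hfree hcap
  have htau : ∀ p, G.tau p (fun p l => Φ * Rw p / G.v p l) = G.tauF p := fun p =>
    Network.tau_eq_tauF fun l => by
      rw [mul_div_cancel₀ _ (G.v_pos p l).ne']
      exact (hcap p).trans (G.cap_le p l)
  simp only [htau] at hle
  have hlow : ∑ p, Φ * Ro p * G.tauF p ≤ ∑ p, Φ * Ro p * G.tau p xo :=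
    Finset.sum_le_sum fun p _ =>
      mul_le_mul_of_nonneg_left (hCo.steady p).tauF_le (mul_nonneg hΦ.le (hRo.1 p))
  have hnn : ∀ p, 0 ≤ (Φ * Ro p - Φ * Rw p) * (G.tauF p - G.tauF k) := by
    intro p
    rcases lt_trichotomy p k with hp | rfl | hp
    · exact mul_nonneg_of_nonpos_of_nonpos
        (sub_nonpos.2 ((hcapo p).trans (hfull p hp).ge)) (sub_nonpos.2 (hordF p k hp).le)
    · simp
    · rw [hzero p hp, mul_zero, sub_zero]
      exact mul_nonneg (mul_nonneg hΦ.le (hRo.1 p)) (sub_nonneg.2 (hordF k p hp).le)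
  -- Both routings carry the total flow `Φ`, so subtracting `τ_k^F` does not change the comparison.
  have hsum : ∑ p, (Φ * Ro p - Φ * Rw p) * (G.tauF p - G.tauF k) ≤ 0 := by
    have : ∑ p, (Φ * Ro p - Φ * Rw p) * (G.tauF p - G.tauF k)
        = ∑ p, Φ * Ro p * G.tauF p - ∑ p, Φ * Rw p * G.tauF p
          - (∑ p, Φ * Ro p - ∑ p, Φ * Rw p) * G.tauF k := by
      rw [sub_mul, Finset.sum_mul, Finset.sum_mul, ← Finset.sum_sub_distrib,
        ← Finset.sum_sub_distrib, ← Finset.sum_sub_distrib]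
      exact Finset.sum_congr rfl fun p _ => by ring
    rw [this, Network.RoutingVector.sum_mul hRo, Network.RoutingVector.sum_mul hSW]
    linarith
  have hterm := fun p => (Finset.sum_eq_zero_iff_of_nonneg fun p _ => hnn p).1
    (le_antisymm hsum (Finset.sum_nonneg fun p _ => hnn p)) p (Finset.mem_univ p)
  have hne : ∀ p, p ≠ k → Rw p = Ro p := by
    intro p hp
    have hF : G.tauF p - G.tauF k ≠ 0 := by
      rcases lt_or_gt_of_ne hp with h | h
      · exact (sub_neg.2 (hordF p k h)).ne
      · exact (sub_pos.2 (hordF k p h)).ne'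
    have := (mul_eq_zero.1 (hterm p)).resolve_right hF
    exact mul_left_cancel₀ hΦ.ne' (sub_eq_zero.1 this).symm
  funext p
  rcases eq_or_ne p k with rfl | hp
  -- The share of `k` is the complement to one of the other shares.
  · have h1 := hSW.2
    have h2 := hRo.2
    rw [← Finset.add_sum_erase _ _ (Finset.mem_univ p)] at h1 h2
    rw [Finset.sum_congr rfl fun q hq => hne q (Finset.ne_of_mem_erase hq)] at h1
    linarith
  · exact hne p hp

end SelfishRouting
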